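/- arXiv:2306.12162 — 3 statements merged into one kernel-verified Lean document; each statement's English description precedes it below -/
import Mathlib

section
/- Let d be a graph pseudometric on a set X with edge set E, let xy ∈ [X]² \ E, let r be a real number with ď(x,y) ≤ r ≤ d̂(x,y), and let D = d ∪ {⟨xy,r⟩}. Then for all u, v ∈ X such that ď(u,v) ≠ Ď(u,v), Ď(u,v) ≠ r − d̈(xy,uv), and Ď(u,v) > d̂(x,y) − 2r, we have Ď(u,v) − ď(u,v) ≤ d̂(x,y) − r and d̂(u,v) − Ď(u,v) ≥ r − ď(x,y). -/
open scoped Classical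

universe u

namespace GraphMetricPaper

variable {X : Type u}

/-- The vertex set `V = ⋃ E` of a graph given by an adjacency relation `E`. -/
def Vtx (E : X → X → Prop) : Set X := {x | ∃ y, E x y}

/-- Two points are joined by a walk in the graph `E`. -/
def Joined (E : X → X → Prop) (x y : X) : Prop :=
  ∃ (n : ℕ) (c : ℕ → X), c 0 = x ∧ c n = y ∧ ∀ i, i < n → E (c i) (c (i + 1))

/-- The set of weights of walks from `x` to `y`. -/
def walkSums (E : X → X → Prop) (d : X → X → ℝ) (x y : X) : Set ℝ :=
  {s | ∃ (n : ℕ) (c : ℕ → X), c 0 = x ∧ c n = y ∧ (∀ i, i < n → E (c i) (c (i + 1))) ∧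
    s = ∑ i ∈ Finset.range n, d (c i) (c (i + 1))}

/-- The shortest-path pseudometric `d̂` determined by a weight function `d` on a graph `E`. -/
noncomputable def hatd (E : X → X → Prop) (d : X → X → ℝ) (x y : X) : ℝ :=
  sInf (walkSums E d x y)

/-- The function `ď` bounding the possible extensions of `d` from below:
`ď(x,y) = sup_{ab ∈ E} max {0, d(ab) - d̂(a,x) - d̂(y,b)}`. -/
noncomputable def checkd (E : X → X → Prop) (d : X → X → ℝ) (x y : X) : ℝ :=
  sSup ({0} ∪ {r | ∃ a b, E a b ∧ r = d a b - hatd E d a x - hatd E d y b})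

/-- The pseudometric `d̈` on doubletons:
`d̈(xy,uv) = min {d̂(x,u) + d̂(y,v), d̂(x,v) + d̂(y,u)}`. -/
noncomputable def ddot (E : X → X → Prop) (d : X → X → ℝ) (x y u v : X) : ℝ :=
  min (hatd E d x u + hatd E d y v) (hatd E d x v + hatd E d y u)

/-- `d` is a graph pseudometric with edge relation `E`:  `E` is a (symmetric, irreflexive)
connected graph, `d` is a nonnegative symmetric weight on the edges, and `d = d̂` on edges. -/
structure IsGraphPseudometric (E : X → X → Prop) (d : X → X → ℝ) : Prop where
  symm : ∀ ⦃a b⦄, E a b → E b a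
  irrefl : ∀ a, ¬ E a a
  wt_symm : ∀ ⦃a b⦄, E a b → d a b = d b a
  nonneg : ∀ ⦃a b⦄, E a b → 0 ≤ d a b
  connected : ∀ x ∈ Vtx E, ∀ y ∈ Vtx E, Joined E x y
  edge_eq : ∀ ⦃a b⦄, E a b → d a b = hatd E d a b

/-- A graph metric is a graph pseudometric with strictly positive weights. -/
def IsGraphMetric (E : X → X → Prop) (d : X → X → ℝ) : Prop :=
  IsGraphPseudometric E d ∧ ∀ ⦃a b⦄, E a b → 0 < d a b

/-- A floppy graph pseudometric: `ď(x,y) < d̂(x,y)` for every `xy ∈ [V]² \ E`. -/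
def FloppyPseudometric (E : X → X → Prop) (d : X → X → ℝ) : Prop :=
  IsGraphPseudometric E d ∧
    ∀ x ∈ Vtx E, ∀ y ∈ Vtx E, x ≠ y → ¬ E x y → checkd E d x y < hatd E d x y

/-- A floppy graph metric: `ď(x,y) < d̂(x,y)` for every `xy ∈ [V]² \ E`. -/
def FloppyMetric (E : X → X → Prop) (d : X → X → ℝ) : Prop :=
  IsGraphMetric E d ∧
    ∀ x ∈ Vtx E, ∀ y ∈ Vtx E, x ≠ y → ¬ E x y → checkd E d x y < hatd E d x y

/-- The edge relation of the one-step extension `E ∪ {xy}`. -/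
def extEdge (E : X → X → Prop) (x y : X) : X → X → Prop :=
  fun a b => E a b ∨ (a = x ∧ b = y) ∨ (a = y ∧ b = x)

/-- The weight function of the one-step extension `d ∪ {⟨xy, r⟩}`. -/
noncomputable def extWt (d : X → X → ℝ) (x y : X) (r : ℝ) : X → X → ℝ :=
  fun a b => if (a = x ∧ b = y) ∨ (a = y ∧ b = x) then r else d a b

/-- The set `[V]² \ E` of unordered pairs of distinct vertices that are not edges. -/
def nonEdgePairs (E : X → X → Prop) : Set (Sym2 X) :=
  {e | ∃ a b : X, e = s(a, b) ∧ a ≠ b ∧ a ∈ Vtx E ∧ b ∈ Vtx E ∧ ¬ E a b}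

/-- A set of (unordered) weighted pairs, presented as a relation `R`, is a full metric
on `V`: it is symmetric, its domain is exactly `[V]²`, it is single-valued, positive,
and satisfies the triangle inequality. -/
def IsFullMetricRel (V : Set X) (R : X → X → ℝ → Prop) : Prop :=
  (∀ a b r, R a b r → R b a r) ∧
  (∀ a b r, R a b r → a ∈ V ∧ b ∈ V ∧ a ≠ b) ∧
  (∀ a b, a ∈ V → b ∈ V → a ≠ b → ∃ r, R a b r) ∧
  (∀ a b r s, R a b r → R a b s → r = s) ∧
  (∀ a b r, R a b r → 0 < r) ∧
  (∀ a b c r s t, R a b r → R b c s → R a c t → t ≤ r + s)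

/-- A weight function `D` on `[V]²` is a full metric on `V`. -/
def IsFullMetricOn (V : Set X) (D : X → X → ℝ) : Prop :=
  (∀ a b, a ∈ V → b ∈ V → a ≠ b → D a b = D b a) ∧
  (∀ a b, a ∈ V → b ∈ V → a ≠ b → 0 < D a b) ∧
  (∀ a b c, a ∈ V → b ∈ V → c ∈ V → a ≠ b → b ≠ c → a ≠ c → D a c ≤ D a b + D b c)

/-- Player I has a winning strategy in the metric-extending game `Game_d(lam, Fam)`:
there are functions `S1, S2` choosing, for each inning `β < lam` and each sequence of
previous answers of player II, a legal doubleton in `[V]²` and a set from `Fam`, such that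
for every play of player II respecting the strategy, the resulting relation
`d ∪ {⟨x_α y_α, r_α⟩ : α < lam}` is a full metric on `V`. -/
def WinningStratI (V : Set X) (E : X → X → Prop) (d : X → X → ℝ)
    (lam : Ordinal.{u}) (Fam : Set (Set ℝ)) : Prop :=
  ∃ (S1 : ∀ β : Ordinal.{u}, β < lam → (∀ α : Ordinal.{u}, α < β → ℝ) → X × X)
    (S2 : ∀ β : Ordinal.{u}, β < lam → (∀ α : Ordinal.{u}, α < β → ℝ) → Set ℝ),
    (∀ β hβ s, S2 β hβ s ∈ Fam) ∧
    (∀ β hβ s, (S1 β hβ s).1 ∈ V ∧ (S1 β hβ s).2 ∈ V ∧ (S1 β hβ s).1 ≠ (S1 β hβ s).2) ∧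
    (∀ s : ∀ α : Ordinal.{u}, α < lam → ℝ,
      (∀ α (hα : α < lam), s α hα ∈ S2 α hα (fun γ hγ => s γ (hγ.trans hα))) →
      IsFullMetricRel V (fun a b r =>
        (E a b ∧ r = d a b) ∨
        ∃ α, ∃ hα : α < lam,
          ((a = (S1 α hα (fun γ hγ => s γ (hγ.trans hα))).1 ∧
            b = (S1 α hα (fun γ hγ => s γ (hγ.trans hα))).2) ∨
           (a = (S1 α hα (fun γ hγ => s γ (hγ.trans hα))).2 ∧
            b = (S1 α hα (fun γ hγ => s γ (hγ.trans hα))).1)) ∧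
          r = s α hα))

/-- Player II has a winning strategy in the metric-extending game `Game_d(lam, Fam)`:
there is a function `T` assigning to each inning `β < lam` and each sequence of moves of
player I (of length `β + 1`) an answer in the set component of the last move, such that
for every legal play of player I, the resulting relation is not a full metric on `V`. -/
def WinningStratII (V : Set X) (E : X → X → Prop) (d : X → X → ℝ)
    (lam : Ordinal.{u}) (Fam : Set (Set ℝ)) : Prop :=
  ∃ T : ∀ β : Ordinal.{u}, β < lam → (∀ α : Ordinal.{u}, α ≤ β → (X × X) × Set ℝ) → ℝ,
    (∀ β hβ p, (p β le_rfl).2 ∈ Fam → T β hβ p ∈ (p β le_rfl).2) ∧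
    (∀ p : ∀ α : Ordinal.{u}, α < lam → (X × X) × Set ℝ,
      (∀ α hα, (p α hα).1.1 ∈ V ∧ (p α hα).1.2 ∈ V ∧ (p α hα).1.1 ≠ (p α hα).1.2 ∧
        (p α hα).2 ∈ Fam) →
      ¬ IsFullMetricRel V (fun a b r =>
        (E a b ∧ r = d a b) ∨
        ∃ α, ∃ hα : α < lam,
          ((a = (p α hα).1.1 ∧ b = (p α hα).1.2) ∨
           (a = (p α hα).1.2 ∧ b = (p α hα).1.1)) ∧
          r = T α hα (fun γ hγ => p γ (lt_of_le_of_lt hγ hα))))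

/-- The edge relation of the glued graph `E_d = E_p ∪ ⋃_{f ∈ F} E_f`. -/
def gluedEdge (Ep : X → X → Prop) (F : Set ((X → X → Prop) × (X → X → ℝ))) :
    X → X → Prop :=
  fun a b => Ep a b ∨ ∃ f ∈ F, f.1 a b

/-- `Λ(v; B) = inf {d̂(a,v) + d̂(v,b) - d̂(a,b) : a, b ∈ B}`. -/
noncomputable def Lam (E : X → X → Prop) (d : X → X → ℝ) (v : X) (B : Set X) : ℝ :=
  sInf {r | ∃ a ∈ B, ∃ b ∈ B, r = hatd E d a v + hatd E d v b - hatd E d a b}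

/-- The gluing setup: a graph pseudometric `p = (Ep, wp)` and a family `F` of graph
pseudometrics such that each member meets `V_p`, agrees with `p̂` on the intersection of
the vertex sets, and distinct members only meet inside `V_p`; `wd` is the glued weight
function `d = p ∪ ⋃ F` on `E_d = E_p ∪ ⋃_{f ∈ F} E_f`. -/
structure GluingSetup (Ep : X → X → Prop) (wp : X → X → ℝ)
    (F : Set ((X → X → Prop) × (X → X → ℝ))) (wd : X → X → ℝ) : Prop where
  hp : IsGraphPseudometric Ep wp
  hF : ∀ f ∈ F, IsGraphPseudometric f.1 f.2
  meet : ∀ f ∈ F, (Vtx f.1 ∩ Vtx Ep).Nonempty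
  agree : ∀ f ∈ F, ∀ x ∈ Vtx f.1 ∩ Vtx Ep, ∀ y ∈ Vtx f.1 ∩ Vtx Ep, x ≠ y →
    hatd f.1 f.2 x y = hatd Ep wp x y
  inter_sub : ∀ f ∈ F, ∀ g ∈ F, f ≠ g → Vtx f.1 ∩ Vtx g.1 ⊆ Vtx Ep
  wd_p : ∀ ⦃a b⦄, Ep a b → wd a b = wp a b
  wd_F : ∀ f ∈ F, ∀ ⦃a b⦄, f.1 a b → wd a b = f.2 a b


/-- A potential which starts nonpositive at `a` and grows along each edge by at most its weight
is bounded above by the shortest-path distance from `a`. -/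
lemma le_hatd_of_potential {E : X → X → Prop} {w : X → X → ℝ} {a b : X} (hj : Joined E a b)
    (f : X → ℝ) (h0 : f a ≤ 0) (hs : ∀ p q, E p q → f q ≤ f p + w p q) :
    f b ≤ hatd E w a b := by
  obtain ⟨n, c, hc0, hcn, hc⟩ := hj
  refine le_csInf ⟨_, n, c, hc0, hcn, hc, rfl⟩ ?_
  rintro _ ⟨n, c, rfl, rfl, hc, rfl⟩
  suffices h : ∀ k ≤ n, f (c k) ≤ ∑ i ∈ Finset.range k, w (c i) (c (i + 1)) from h n le_rfl
  intro k
  induction k with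
  | zero => intro _; simpa using h0
  | succ k ih =>
    intro hk
    rw [Finset.sum_range_succ]
    linarith [ih (by omega), hs _ _ (hc k (by omega))]

lemma walkSums_nonneg {E : X → X → Prop} {w : X → X → ℝ} (hw : ∀ p q, E p q → 0 ≤ w p q)
    {a b : X} {s : ℝ} (hs : s ∈ walkSums E w a b) : 0 ≤ s := by
  obtain ⟨n, c, -, -, hc, rfl⟩ := hs
  exact Finset.sum_nonneg fun i hi => hw _ _ (hc i (Finset.mem_range.1 hi))

lemma hatd_nonneg {E : X → X → Prop} {w : X → X → ℝ} (hw : ∀ p q, E p q → 0 ≤ w p q)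
    (a b : X) : 0 ≤ hatd E w a b :=
  Real.sInf_nonneg fun _ hs => walkSums_nonneg hw hs

lemma hatd_le_of_mem {E : X → X → Prop} {w : X → X → ℝ} (hw : ∀ p q, E p q → 0 ≤ w p q)
    {a b : X} {s : ℝ} (hs : s ∈ walkSums E w a b) : hatd E w a b ≤ s :=
  csInf_le ⟨0, fun _ ht => walkSums_nonneg hw ht⟩ hs

lemma hatd_self {E : X → X → Prop} {w : X → X → ℝ} (hw : ∀ p q, E p q → 0 ≤ w p q)
    (a : X) : hatd E w a a = 0 :=
  le_antisymm (hatd_le_of_mem hw ⟨0, fun _ => a, rfl, rfl, by simp, by simp⟩) (hatd_nonneg hw a a)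

lemma hatd_le_add_edge {E : X → X → Prop} {w : X → X → ℝ} (hw : ∀ p q, E p q → 0 ≤ w p q)
    {a b z : X} (hj : Joined E a b) (hE : E b z) :
    hatd E w a z ≤ hatd E w a b + w b z := by
  rw [← sub_le_iff_le_add]
  obtain ⟨n, c, hc0, hcn, hc⟩ := hj
  refine le_csInf ⟨_, n, c, hc0, hcn, hc, rfl⟩ ?_
  rintro _ ⟨n, c, rfl, rfl, hc, rfl⟩
  rw [sub_le_iff_le_add]
  refine hatd_le_of_mem hw ⟨n + 1, fun i => if i ≤ n then c i else z, by simp, by simp, ?_, ?_⟩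
  · intro i hi
    rcases Nat.lt_succ_iff_lt_or_eq.1 hi with h | rfl
    · simpa [h.le, Nat.succ_le_of_lt h] using hc i h
    · simpa using hE
  · rw [Finset.sum_range_succ]
    congr 1
    · refine Finset.sum_congr rfl fun i hi => ?_
      have h := Finset.mem_range.1 hi
      simp [h.le, Nat.succ_le_of_lt h]
    · simp

lemma hatd_triangle {E : X → X → Prop} {w : X → X → ℝ} (hw : ∀ p q, E p q → 0 ≤ w p q)
    (hj : ∀ p q, Joined E p q) (a b z : X) :
    hatd E w a z ≤ hatd E w a b + hatd E w b z := by
  have h := le_hatd_of_potential (w := w) (hj b z) (fun q => hatd E w a q - hatd E w a b)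
    (by simp) (fun p q hpq => by linarith [hatd_le_add_edge hw (hj a p) hpq])
  linarith

lemma hatd_comm {E : X → X → Prop} {w : X → X → ℝ} (hw : ∀ p q, E p q → 0 ≤ w p q)
    (hj : ∀ p q, Joined E p q) (hE : ∀ p q, E p q → E q p)
    (hsymm : ∀ p q, E p q → w p q = w q p) (a b : X) :
    hatd E w a b = hatd E w b a := by
  have key : ∀ a b, hatd E w b a ≤ hatd E w a b := fun a b =>
    le_hatd_of_potential (hj a b) (fun q => hatd E w q a) (hatd_self hw a).le
      fun p q hpq => by
        have h1 := hatd_le_add_edge hw (hj q q) (hE p q hpq)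
        have h2 := hatd_triangle hw hj q p a
        rw [hatd_self hw, zero_add] at h1
        linarith [hsymm p q hpq]
  exact le_antisymm (key b a) (key a b)

lemma extWt_of_edge {E : X → X → Prop} (d : X → X → ℝ) {x y : X} (r : ℝ)
    (hxy : ¬ E x y) (hyx : ¬ E y x) {a b : X} (h : E a b) : extWt d x y r a b = d a b := by
  refine if_neg ?_
  rintro (⟨rfl, rfl⟩ | ⟨rfl, rfl⟩)
  · exact hxy h
  · exact hyx h

lemma extWt_nonneg {E : X → X → Prop} {d : X → X → ℝ} {x y : X} {r : ℝ} (hr : 0 ≤ r)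
    (hd : ∀ p q, E p q → 0 ≤ d p q) (a b : X) (h : extEdge E x y a b) :
    0 ≤ extWt d x y r a b := by
  unfold extWt
  split_ifs with hab
  · exact hr
  · exact hd a b (h.resolve_right hab)

/-- Adding an edge can only shorten distances. -/
lemma hatd_ext_le {E : X → X → Prop} {d : X → X → ℝ} {x y : X} {r : ℝ} (hr : 0 ≤ r)
    (hd : ∀ p q, E p q → 0 ≤ d p q) (hxy : ¬ E x y) (hyx : ¬ E y x) {a b : X}
    (hj : Joined E a b) :
    hatd (extEdge E x y) (extWt d x y r) a b ≤ hatd E d a b := by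
  obtain ⟨n, c, hc0, hcn, hc⟩ := hj
  refine le_csInf ⟨_, n, c, hc0, hcn, hc, rfl⟩ ?_
  rintro _ ⟨n, c, hc0, hcn, hc, rfl⟩
  refine hatd_le_of_mem (extWt_nonneg hr hd) ⟨n, c, hc0, hcn, fun i hi => .inl (hc i hi), ?_⟩
  exact Finset.sum_congr rfl fun i hi =>
    (extWt_of_edge d r hxy hyx (hc i (Finset.mem_range.1 hi))).symm

/-- A shortest path in the extended graph uses the new edge at most once. -/
lemma le_hatd_ext {E : X → X → Prop} {d : X → X → ℝ} {x y : X} {r : ℝ} (hr : 0 ≤ r)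
    (hd : ∀ p q, E p q → 0 ≤ d p q) (hxy : ¬ E x y) (hyx : ¬ E y x)
    (hj : ∀ p q, Joined E p q) (a b : X) :
    hatd E d a b ≤ hatd (extEdge E x y) (extWt d x y r) a b ∨
    hatd E d a x + r + hatd E d y b ≤ hatd (extEdge E x y) (extWt d x y r) a b ∨
    hatd E d a y + r + hatd E d x b ≤ hatd (extEdge E x y) (extWt d x y r) a b := by
  have hj' : Joined (extEdge E x y) a b := by
    obtain ⟨n, c, hc0, hcn, hc⟩ := hj a b
    exact ⟨n, c, hc0, hcn, fun i hi => .inl (hc i hi)⟩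
  have h := le_hatd_of_potential (w := extWt d x y r) hj'
    (fun q => min (hatd E d a q) (min (hatd E d a x + r + hatd E d y q)
      (hatd E d a y + r + hatd E d x q))) ?_ ?_
  · simpa only [min_le_iff] using h
  · exact (min_le_left _ _).trans (hatd_self hd a).le
  · intro p q hpq
    have hx := hatd_self hd x
    have hy := hatd_self hd y
    have hyx0 := hatd_nonneg hd y x
    have hxy0 := hatd_nonneg hd x y
    rw [← sub_le_iff_le_add]
    rcases hpq with hpq | ⟨rfl, rfl⟩ | ⟨rfl, rfl⟩
    · rw [extWt_of_edge d r hxy hyx hpq]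
      have h1 := hatd_le_add_edge hd (hj a p) hpq
      have h2 := hatd_le_add_edge hd (hj x p) hpq
      have h3 := hatd_le_add_edge hd (hj y p) hpq
      refine le_min ?_ (le_min ?_ ?_) <;> rw [sub_le_iff_le_add]
      · exact (min_le_left _ _).trans h1
      · exact ((min_le_right _ _).trans (min_le_left _ _)).trans (by linarith)
      · exact ((min_le_right _ _).trans (min_le_right _ _)).trans (by linarith)
    · simp only [extWt, and_self, true_or, if_true]
      refine le_min ?_ (le_min ?_ ?_) <;> rw [sub_le_iff_le_add]
      · exact ((min_le_right _ _).trans (min_le_left _ _)).trans (by linarith)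
      · exact ((min_le_right _ _).trans (min_le_left _ _)).trans (by linarith)
      · exact (min_le_left _ _).trans (by linarith)
    · simp only [extWt, and_self, or_true, if_true]
      refine le_min ?_ (le_min ?_ ?_) <;> rw [sub_le_iff_le_add]
      · exact ((min_le_right _ _).trans (min_le_right _ _)).trans (by linarith)
      · exact (min_le_left _ _).trans (by linarith)
      · exact ((min_le_right _ _).trans (min_le_right _ _)).trans (by linarith)

/-- With `D = d ∪ {⟨xy, r⟩}` for `ď(x,y) ≤ r ≤ d̂(x,y)`: whenever
`ď(u,v) ≠ Ď(u,v)`, `Ď(u,v) ≠ r − d̈(xy,uv)` and `Ď(u,v) > d̂(x,y) − 2r`, we have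
`Ď(u,v) − ď(u,v) ≤ d̂(x,y) − r` and `d̂(u,v) − Ď(u,v) ≥ r − ď(x,y)`. -/
theorem one_step_extension_estimates₄ (E : X → X → Prop) (d : X → X → ℝ)
    (hd : IsGraphPseudometric E d) (hvert : ∀ z : X, z ∈ Vtx E)
    (x y : X) (hxy : x ≠ y) (hnE : ¬ E x y) (r : ℝ)
    (hr₁ : checkd E d x y ≤ r) (hr₂ : r ≤ hatd E d x y) :
    ∀ u v : X,
      checkd E d u v ≠ checkd (extEdge E x y) (extWt d x y r) u v →
      checkd (extEdge E x y) (extWt d x y r) u v ≠ r - ddot E d x y u v →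
      hatd E d x y - 2 * r < checkd (extEdge E x y) (extWt d x y r) u v →
      checkd (extEdge E x y) (extWt d x y r) u v - checkd E d u v ≤ hatd E d x y - r ∧
      r - checkd E d x y ≤
        hatd E d u v - checkd (extEdge E x y) (extWt d x y r) u v := by
  intro u v hne hne' _
  have hj : ∀ p q, Joined E p q := fun p q => hd.connected p (hvert p) q (hvert q)
  have hw : ∀ p q, E p q → 0 ≤ d p q := fun p q h => hd.nonneg h
  have hyx : ¬ E y x := fun h => hnE (hd.symm h)
  have tri := hatd_triangle hw hj
  have comm := hatd_comm hw hj (fun p q h => hd.symm h) (fun p q h => hd.wt_symm h)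
  have pos := hatd_nonneg hw
  have bdd : ∀ p q, BddAbove
      ({0} ∪ {s | ∃ a b, E a b ∧ s = d a b - hatd E d a p - hatd E d q b}) := by
    refine fun p q => ⟨hatd E d p q, ?_⟩
    rintro _ (rfl | ⟨a, b, hab, rfl⟩)
    · exact pos p q
    · linarith [hd.edge_eq hab, tri a p b, tri p q b]
  have check_nonneg : ∀ p q, 0 ≤ checkd E d p q := fun p q => le_csSup (bdd p q) (.inl rfl)
  have le_check : ∀ p q a b, E a b → d a b - hatd E d a p - hatd E d q b ≤ checkd E d p q :=
    fun p q a b hab => le_csSup (bdd p q) (.inr ⟨a, b, hab, rfl⟩)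
  have hr : 0 ≤ r := (check_nonneg x y).trans hr₁
  have hle : ∀ p q, hatd (extEdge E x y) (extWt d x y r) p q ≤ hatd E d p q :=
    fun p q => hatd_ext_le hr hw hnE hyx (hj p q)
  have hpos : ∀ p q, 0 ≤ hatd (extEdge E x y) (extWt d x y r) p q :=
    hatd_nonneg (extWt_nonneg hr hw)
  have hge := le_hatd_ext hr hw hnE hyx hj
  have wt_edge : ∀ a b, E a b → extWt d x y r a b = d a b :=
    fun a b hab => extWt_of_edge d r hnE hyx hab
  have wt_xy : extWt d x y r x y = r := by simp [extWt]
  have wt_yx : extWt d x y r y x = r := by simp [extWt]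
  have dd₁ : ddot E d x y u v ≤ hatd E d x u + hatd E d y v := min_le_left _ _
  have dd₂ : ddot E d x y u v ≤ hatd E d x v + hatd E d y u := min_le_right _ _
  have cuv := check_nonneg u v
  have bound : ∀ s ∈ ({0} ∪ {s | ∃ a b, extEdge E x y a b ∧ s = extWt d x y r a b -
      hatd (extEdge E x y) (extWt d x y r) a u -
      hatd (extEdge E x y) (extWt d x y r) v b} : Set ℝ),
      s ≤ max (max (checkd E d u v) (r - ddot E d x y u v))
        (min (checkd E d u v + (hatd E d x y - r))
          (hatd E d u v - (r - checkd E d x y))) := by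
    rintro s (rfl | ⟨a, b, hab | ⟨ha, hb⟩ | ⟨ha, hb⟩, rfl⟩)
    · exact le_max_of_le_left (le_max_of_le_left cuv)
    · rw [wt_edge a b hab]
      have c₁ := le_check u v a b hab
      have c₂ := le_check x y a b hab
      have c₃ := le_check x y b a (hd.symm hab)
      have e := hd.edge_eq hab
      have e' := hd.wt_symm hab
      rcases hge a u with h₁ | h₁ | h₁ <;> rcases hge v b with h₂ | h₂ | h₂
      · exact le_max_of_le_left (le_max_of_le_left (by linarith))
      · refine le_max_of_le_right (le_min ?_ ?_)
        · linarith [tri v x b, tri x y b]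
        · linarith [tri a u x, tri u v x, comm a y, comm x b]
      · refine le_max_of_le_right (le_min ?_ ?_)
        · linarith [tri v y b, tri y x b, comm x y]
        · linarith [tri a u y, tri u v y, comm a y, comm x b]
      · refine le_max_of_le_right (le_min ?_ ?_)
        · linarith [tri a x u, tri x y u]
        · linarith [tri y u b, tri u v b]
      · refine le_max_of_le_left (le_max_of_le_left ?_)
        linarith [pos y u, pos v x]
      · refine le_max_of_le_left (le_max_of_le_left ?_)
        linarith [pos y u, pos v y, tri a x b]
      · refine le_max_of_le_right (le_min ?_ ?_)
        · linarith [tri a y u, tri y x u, comm x y]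
        · linarith [tri x u b, tri u v b, comm a y, comm x b]
      · refine le_max_of_le_left (le_max_of_le_left ?_)
        linarith [pos x u, pos v x, tri a y b]
      · refine le_max_of_le_left (le_max_of_le_left ?_)
        linarith [pos x u, pos v y, comm a y, comm x b]
    · rw [ha, hb, wt_xy]
      have n₁ := hpos x u
      have n₂ := hpos v y
      rcases hge x u with h₁ | h₁ | h₁
      · rcases hge v y with h₂ | h₂ | h₂
        · refine le_max_of_le_left (le_max_of_le_right ?_)
          linarith [comm v y]
        · refine le_max_of_le_left (le_max_of_le_left ?_)
          linarith [pos v x, pos y y]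
        · refine le_max_of_le_left (le_max_of_le_left ?_)
          linarith [pos v y, pos x y]
      · refine le_max_of_le_left (le_max_of_le_left ?_)
        linarith [pos x x, pos y u]
      · refine le_max_of_le_left (le_max_of_le_left ?_)
        linarith [pos x y, pos x u]
    · rw [ha, hb, wt_yx]
      have n₁ := hpos y u
      have n₂ := hpos v x
      rcases hge y u with h₁ | h₁ | h₁
      · rcases hge v x with h₂ | h₂ | h₂
        · refine le_max_of_le_left (le_max_of_le_right ?_)
          linarith [comm v x]
        · refine le_max_of_le_left (le_max_of_le_left ?_)
          linarith [pos v x, pos y x]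
        · refine le_max_of_le_left (le_max_of_le_left ?_)
          linarith [pos v y, pos x x]
      · refine le_max_of_le_left (le_max_of_le_left ?_)
        linarith [pos y x, pos y u]
      · refine le_max_of_le_left (le_max_of_le_left ?_)
        linarith [pos y y, pos x u]
  have hC : checkd (extEdge E x y) (extWt d x y r) u v ≤ _ := csSup_le ⟨0, .inl rfl⟩ bound
  have le_C : ∀ a b, extEdge E x y a b → extWt d x y r a b -
      hatd (extEdge E x y) (extWt d x y r) a u - hatd (extEdge E x y) (extWt d x y r) v b ≤
      checkd (extEdge E x y) (extWt d x y r) u v :=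
    fun a b hab => le_csSup ⟨_, bound⟩ (.inr ⟨a, b, hab, rfl⟩)
  have h₁ : checkd E d u v ≤ checkd (extEdge E x y) (extWt d x y r) u v := by
    refine csSup_le ⟨0, .inl rfl⟩ ?_
    rintro _ (rfl | ⟨a, b, hab, rfl⟩)
    · exact le_csSup ⟨_, bound⟩ (.inl rfl)
    · linarith [le_C a b (.inl hab), wt_edge a b hab, hle a u, hle v b]
  have h₂ : r - ddot E d x y u v ≤ checkd (extEdge E x y) (extWt d x y r) u v := by
    rw [sub_le_comm]
    refine le_min ?_ ?_
    · linarith [le_C x y (.inr (.inl ⟨rfl, rfl⟩)), hle x u, hle v y, comm v y]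
    · linarith [le_C y x (.inr (.inr ⟨rfl, rfl⟩)), hle y u, hle v x, comm v x]
  have hlt := max_lt (lt_of_le_of_ne h₁ hne) (lt_of_le_of_ne h₂ hne'.symm)
  have hfin := le_min_iff.1 ((le_max_iff.1 hC).resolve_left hlt.not_ge)
  exact ⟨by linarith [hfin.1], by linarith [hfin.2]⟩

end GraphMetricPaper
end

section
/- Let d be a graph pseudometric on a set X with edge set E, let xy ∈ [X]² \ E, let r be a real number with (1/3)·ď(x,y) + (2/3)·d̂(x,y) ≤ r ≤ d̂(x,y) (in particular ď(x,y) ≤ r ≤ d̂(x,y)), and let D = d ∪ {⟨xy,r⟩}. Then for all u, v ∈ X: D̂(u,v) − Ď(u,v) ≥ min{d̂(u,v) − ď(u,v), d̂(x,y) − r, 2·d̈(xy,uv)}. -/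
open scoped Classical

universe u

namespace GraphMetricPaper

variable {X : Type u}

theorem walkSums_refl (E : X → X → Prop) (d : X → X → ℝ) (z : X) : 0 ∈ walkSums E d z z :=
  ⟨0, fun _ => z, rfl, rfl, fun i hi => absurd hi (Nat.not_lt_zero i), by simp⟩

theorem walkSums_cons {E : X → X → Prop} {d : X → X → ℝ} {a b z : X} {s : ℝ}
    (hab : E a b) (hs : s ∈ walkSums E d b z) : d a b + s ∈ walkSums E d a z := by
  obtain ⟨n, c, h0, hn, hc, rfl⟩ := hs
  refine ⟨n + 1, fun i => Nat.casesOn i a c, rfl, hn, ?_, ?_⟩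
  · rintro (_ | i) hi
    · simpa [h0] using hab
    · exact hc i (by omega)
  · rw [Finset.sum_range_succ', add_comm]
    simp [h0]

/-- Induction on a walk ending at `z`, adding edges at the front. -/
theorem walkSums_induction {E : X → X → Prop} {d : X → X → ℝ} {z : X} {P : X → ℝ → Prop}
    (nil : P z 0) (cons : ∀ a b s, E a b → P b s → P a (d a b + s))
    {a : X} {s : ℝ} (hs : s ∈ walkSums E d a z) : P a s := by
  obtain ⟨n, c, rfl, hn, hc, rfl⟩ := hs
  induction n generalizing c with
  | zero => simpa [hn] using nil
  | succ n ih =>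
    rw [Finset.sum_range_succ', add_comm]
    exact cons _ _ _ (hc 0 n.succ_pos)
      (ih (fun i => c (i + 1)) hn fun i hi => hc (i + 1) (by omega))

theorem walkSums_append {E : X → X → Prop} {d : X → X → ℝ} {a b z : X} {s t : ℝ}
    (hs : s ∈ walkSums E d a b) (ht : t ∈ walkSums E d b z) : s + t ∈ walkSums E d a z := by
  refine walkSums_induction (P := fun a s => s + t ∈ walkSums E d a z) (by simpa using ht) ?_ hs
  intro a b s hab h
  simpa [add_assoc] using walkSums_cons hab h

namespace IsGraphPseudometric

variable {E : X → X → Prop} {d : X → X → ℝ}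

theorem walkSums_symm (hd : IsGraphPseudometric E d) {a z : X} {s : ℝ}
    (hs : s ∈ walkSums E d a z) : s ∈ walkSums E d z a := by
  refine walkSums_induction (P := fun a s => s ∈ walkSums E d z a) (walkSums_refl E d z) ?_ hs
  intro a b s hab h
  have hba := walkSums_cons (hd.symm hab) (walkSums_refl E d a)
  rw [add_zero, ← hd.wt_symm hab] at hba
  simpa [add_comm] using walkSums_append h hba

theorem walkSums_nonneg (hd : IsGraphPseudometric E d) {a z : X} {s : ℝ}
    (hs : s ∈ walkSums E d a z) : 0 ≤ s :=
  walkSums_induction (P := fun _ s => 0 ≤ s) le_rfl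
    (fun _ _ _ hab h => add_nonneg (hd.nonneg hab) h) hs

theorem walkSums_bddBelow (hd : IsGraphPseudometric E d) (a z : X) :
    BddBelow (walkSums E d a z) :=
  ⟨0, fun _ hs => hd.walkSums_nonneg hs⟩

theorem walkSums_nonempty (hd : IsGraphPseudometric E d) (hvert : ∀ z : X, z ∈ Vtx E)
    (a z : X) : (walkSums E d a z).Nonempty := by
  obtain ⟨n, c, h0, hn, hc⟩ := hd.connected a (hvert a) z (hvert z)
  exact ⟨_, n, c, h0, hn, hc, rfl⟩

theorem hatd_nonneg (hd : IsGraphPseudometric E d) (a b : X) : 0 ≤ hatd E d a b :=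
  Real.sInf_nonneg fun _ hs => hd.walkSums_nonneg hs

theorem hatd_self (hd : IsGraphPseudometric E d) (a : X) : hatd E d a a = 0 :=
  le_antisymm (csInf_le (hd.walkSums_bddBelow a a) (walkSums_refl E d a)) (hd.hatd_nonneg a a)

theorem hatd_comm (hd : IsGraphPseudometric E d) (a b : X) : hatd E d a b = hatd E d b a :=
  congrArg sInf (Set.ext fun _ => ⟨hd.walkSums_symm, hd.walkSums_symm⟩)

theorem hatd_triangle (hd : IsGraphPseudometric E d) (hvert : ∀ z : X, z ∈ Vtx E)
    (a b c : X) : hatd E d a c ≤ hatd E d a b + hatd E d b c := by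
  rw [← sub_le_iff_le_add]
  refine le_csInf (hd.walkSums_nonempty hvert a b) fun s hs => ?_
  rw [sub_le_comm]
  refine le_csInf (hd.walkSums_nonempty hvert b c) fun t ht => ?_
  rw [sub_le_iff_le_add, add_comm]
  exact csInf_le (hd.walkSums_bddBelow a c) (walkSums_append hs ht)

theorem bddAbove_checkd (hd : IsGraphPseudometric E d) (hvert : ∀ z : X, z ∈ Vtx E) (x y : X) :
    BddAbove ({0} ∪ {r | ∃ a b, E a b ∧ r = d a b - hatd E d a x - hatd E d y b}) := by
  refine ⟨hatd E d x y, ?_⟩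
  rintro _ (rfl | ⟨a, b, hab, rfl⟩)
  · exact hd.hatd_nonneg x y
  · rw [hd.edge_eq hab]
    linarith [hd.hatd_triangle hvert a x b, hd.hatd_triangle hvert x y b]

theorem checkd_nonneg (hd : IsGraphPseudometric E d) (hvert : ∀ z : X, z ∈ Vtx E) (x y : X) :
    0 ≤ checkd E d x y :=
  le_csSup (hd.bddAbove_checkd hvert x y) (Or.inl rfl)

theorem le_checkd (hd : IsGraphPseudometric E d) (hvert : ∀ z : X, z ∈ Vtx E) (x y : X)
    {a b : X} (hab : E a b) : d a b - hatd E d a x - hatd E d y b ≤ checkd E d x y :=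
  le_csSup (hd.bddAbove_checkd hvert x y) (Or.inr ⟨a, b, hab, rfl⟩)

/-- A walk in the one-step extension is at least as long as one using the new edge at most once. -/
theorem min_le_hatd_ext (hd : IsGraphPseudometric E d) (hvert : ∀ z : X, z ∈ Vtx E)
    {x y : X} (hnE : ¬ E x y) {r : ℝ} (hr : 0 ≤ r) (u v : X) :
    min (hatd E d u v) (min (hatd E d u x + r + hatd E d y v) (hatd E d u y + r + hatd E d x v)) ≤
      hatd (extEdge E x y) (extWt d x y r) u v := by
  have hne : (walkSums (extEdge E x y) (extWt d x y r) u v).Nonempty := by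
    obtain ⟨n, c, h0, hn, hc⟩ := hd.connected u (hvert u) v (hvert v)
    exact ⟨_, n, c, h0, hn, fun i hi => Or.inl (hc i hi), rfl⟩
  refine le_csInf hne fun s hs => ?_
  refine walkSums_induction (P := fun u s => min (hatd E d u v)
    (min (hatd E d u x + r + hatd E d y v) (hatd E d u y + r + hatd E d x v)) ≤ s) ?_ ?_ hs
  · exact (min_le_left _ _).trans (hd.hatd_self v).le
  · intro a b s hab h
    have hx := hd.hatd_self x
    have hy := hd.hatd_self y
    have hxy := hd.hatd_nonneg x y
    have hyx := hd.hatd_nonneg y x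
    by_cases hnew : (a = x ∧ b = y) ∨ (a = y ∧ b = x)
    · rw [extWt, if_pos hnew]
      simp only [min_le_iff] at h ⊢
      rcases hnew with ⟨rfl, rfl⟩ | ⟨rfl, rfl⟩
      · rcases h with h | h | h
        · exact Or.inr (Or.inl (by linarith))
        · exact Or.inr (Or.inl (by linarith))
        · exact Or.inl (by linarith)
      · rcases h with h | h | h
        · exact Or.inr (Or.inr (by linarith))
        · exact Or.inl (by linarith)
        · exact Or.inr (Or.inr (by linarith))
    · rw [extWt, if_neg hnew, hd.edge_eq (hab.resolve_right hnew)]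
      simp only [min_le_iff] at h ⊢
      refine h.imp (fun h => ?_) (Or.imp (fun h => ?_) fun h => ?_)
      · linarith [hd.hatd_triangle hvert a b v]
      · linarith [hd.hatd_triangle hvert a b x]
      · linarith [hd.hatd_triangle hvert a b y]

end IsGraphPseudometric

/-- With `D = d ∪ {⟨xy, r⟩}` for
`(1/3)ď(x,y) + (2/3)d̂(x,y) ≤ r ≤ d̂(x,y)` (in particular `ď(x,y) ≤ r ≤ d̂(x,y)`):
`D̂(u,v) − Ď(u,v) ≥ min {d̂(u,v) − ď(u,v), d̂(x,y) − r, 2·d̈(xy,uv)}` for all `u, v`. -/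
theorem one_step_extension_estimates₅ (E : X → X → Prop) (d : X → X → ℝ)
    (hd : IsGraphPseudometric E d) (hvert : ∀ z : X, z ∈ Vtx E)
    (x y : X) (hxy : x ≠ y) (hnE : ¬ E x y) (r : ℝ)
    (hr₀ : checkd E d x y ≤ r)
    (hr₁ : (1 / 3) * checkd E d x y + (2 / 3) * hatd E d x y ≤ r)
    (hr₂ : r ≤ hatd E d x y) :
    ∀ u v : X,
      min (min (hatd E d u v - checkd E d u v) (hatd E d x y - r))
          (2 * ddot E d x y u v) ≤
        hatd (extEdge E x y) (extWt d x y r) u v -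
          checkd (extEdge E x y) (extWt d x y r) u v := by
  intro u v
  have hk := hd.checkd_nonneg hvert x y
  have hc := hd.checkd_nonneg hvert u v
  have hr : 0 ≤ r := hk.trans hr₀
  have nonneg := hd.hatd_nonneg
  have comm := hd.hatd_comm
  have tri := hd.hatd_triangle hvert
  have ext_cases (s t : X) := hd.min_le_hatd_ext hvert hnE hr s t
  simp only [min_le_iff] at ext_cases
  set m := min (min (hatd E d u v - checkd E d u v) (hatd E d x y - r)) (2 * ddot E d x y u v)
  have m_le_floppy : m ≤ hatd E d u v - checkd E d u v :=
    (min_le_left _ _).trans (min_le_left _ _)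
  have m_le_gap : m ≤ hatd E d x y - r := (min_le_left _ _).trans (min_le_right _ _)
  have m_le_ddot : m ≤ 2 * ddot E d x y u v := min_le_right _ _
  have m_le_parallel : m ≤ 2 * (hatd E d x u + hatd E d y v) :=
    m_le_ddot.trans (mul_le_mul_of_nonneg_left (min_le_left _ _) zero_le_two)
  have m_le_crossed : m ≤ 2 * (hatd E d x v + hatd E d y u) :=
    m_le_ddot.trans (mul_le_mul_of_nonneg_left (min_le_right _ _) zero_le_two)
  have hxu := comm u x
  have hyu := comm u y
  have hxv := comm v x
  have hyv := comm v y
  rw [le_sub_comm]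
  refine csSup_le ⟨0, Or.inl rfl⟩ ?_
  rintro _ (rfl | ⟨a, b, hab, rfl⟩)
  · rcases ext_cases u v with h | h | h
    · linarith
    · linarith [nonneg u x, nonneg y v]
    · linarith [nonneg u y, nonneg x v]
  · by_cases hnew : (a = x ∧ b = y) ∨ (a = y ∧ b = x)
    · rw [extWt, if_pos hnew]
      have hyx := comm y x
      have hx := hd.hatd_self x
      have hy := hd.hatd_self y
      have nxu := nonneg x u
      have nyu := nonneg y u
      have nxv := nonneg x v
      have nyv := nonneg y v
      have xuv := tri x u v
      have xvy := tri x v y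
      have yuv := tri y u v
      rcases ext_cases u v with huv | huv | huv <;>
      rcases ext_cases a u with hau | hau | hau <;>
      rcases ext_cases v b with hvb | hvb | hvb <;>
      rcases hnew with ⟨rfl, rfl⟩ | ⟨rfl, rfl⟩ <;>
      linarith
    · have hE := hab.resolve_right hnew
      rw [extWt, if_neg hnew]
      have hab_eq := hd.edge_eq hE
      have le_uv := hd.le_checkd hvert u v hE
      have le_xy := hd.le_checkd hvert x y hE
      have le_yx := hd.le_checkd hvert x y (hd.symm hE)
      rw [← hd.wt_symm hE, comm b x, comm y a] at le_yx
      have aux := tri a u x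
      have auy := tri a u y
      have xvb := tri x v b
      have yvb := tri y v b
      have axb := tri a x b
      have ayb := tri a y b
      have xuv := tri x u v
      have uvx := tri u v x
      have uvy := tri u v y
      have yuv := tri y u v
      have uxv := tri u x v
      have uyv := tri u y v
      rcases ext_cases u v with huv | huv | huv <;>
      rcases ext_cases a u with hau | hau | hau <;>
      rcases ext_cases v b with hvb | hvb | hvb <;>
      linarith

end GraphMetricPaper
end

section
/- In the gluing setup, for every x, y ∈ V_p we have d̂(x,y) = p̂(x,y). -/
open scoped Classical

universe u

namespace GraphMetricPaper

variable {X : Type u}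

theorem add_mem_walkSums {E : X → X → Prop} {d : X → X → ℝ} {x y z : X} {s t : ℝ}
    (hs : s ∈ walkSums E d x y) (ht : t ∈ walkSums E d y z) :
    s + t ∈ walkSums E d x z := by
  obtain ⟨n, c, hc0, hcn, hc, rfl⟩ := hs
  obtain ⟨m, e, he0, hem, he, rfl⟩ := ht
  have left : ∀ i, i ≤ n → (if i < n then c i else e (i - n)) = c i := by
    intro i hi
    split_ifs with h
    · rfl
    · obtain rfl : i = n := by omega
      simp [he0, hcn]
  have right : ∀ i, (if n + i < n then c (n + i) else e (n + i - n)) = e i := by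
    intro i
    simp
  refine ⟨n + m, fun i => if i < n then c i else e (i - n), ?_, ?_, ?_, ?_⟩
  · simpa only [hc0] using left 0 (Nat.zero_le n)
  · simpa only [hem] using right m
  · intro i hi
    rcases lt_or_ge i n with h | h
    · simp only [left i h.le, left (i + 1) h]
      exact hc i h
    · obtain ⟨k, rfl⟩ := Nat.exists_eq_add_of_le h
      simp only [add_assoc, right]
      exact he k (by omega)
  · rw [Finset.sum_range_add]
    congr 1
    · refine Finset.sum_congr rfl fun i hi => ?_
      have hi := Finset.mem_range.1 hi
      simp only [left i hi.le, left (i + 1) hi]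
    · refine Finset.sum_congr rfl fun i _ => ?_
      simp only [add_assoc, right]

theorem zero_mem_walkSums (E : X → X → Prop) (d : X → X → ℝ) (x : X) :
    0 ∈ walkSums E d x x :=
  ⟨0, fun _ => x, rfl, rfl, by simp, by simp⟩

theorem edge_mem_walkSums {E : X → X → Prop} (d : X → X → ℝ) {a b : X} (h : E a b) :
    d a b ∈ walkSums E d a b :=
  ⟨1, fun i => if i = 0 then a else b, by simp, by simp, by simpa using h, by simp⟩

theorem Joined.walkSums_nonempty {E : X → X → Prop} {x y : X} (h : Joined E x y)
    (d : X → X → ℝ) : (walkSums E d x y).Nonempty := by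
  obtain ⟨n, c, hc0, hcn, hc⟩ := h
  exact ⟨_, n, c, hc0, hcn, hc, rfl⟩

theorem nonneg_of_mem_walkSums {E : X → X → Prop} {d : X → X → ℝ}
    (hd : ∀ ⦃a b⦄, E a b → 0 ≤ d a b) {x y : X} {s : ℝ} (hs : s ∈ walkSums E d x y) :
    0 ≤ s := by
  obtain ⟨n, c, -, -, hc, rfl⟩ := hs
  exact Finset.sum_nonneg fun i hi => hd (hc i (Finset.mem_range.1 hi))

theorem bddBelow_walkSums {E : X → X → Prop} {d : X → X → ℝ}
    (hd : ∀ ⦃a b⦄, E a b → 0 ≤ d a b) (x y : X) : BddBelow (walkSums E d x y) :=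
  ⟨0, fun _ hs => nonneg_of_mem_walkSums hd hs⟩

theorem hatd_nonneg_s13 {E : X → X → Prop} {d : X → X → ℝ}
    (hd : ∀ ⦃a b⦄, E a b → 0 ≤ d a b) (x y : X) : 0 ≤ hatd E d x y :=
  Real.sInf_nonneg fun _ hs => nonneg_of_mem_walkSums hd hs

theorem hatd_self_s13 {E : X → X → Prop} {d : X → X → ℝ}
    (hd : ∀ ⦃a b⦄, E a b → 0 ≤ d a b) (x : X) : hatd E d x x = 0 :=
  le_antisymm (csInf_le (bddBelow_walkSums hd x x) (zero_mem_walkSums E d x))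
    (hatd_nonneg_s13 hd x x)

theorem hatd_le_of_edge {E : X → X → Prop} {d : X → X → ℝ}
    (hd : ∀ ⦃a b⦄, E a b → 0 ≤ d a b) {a b : X} (h : E a b) : hatd E d a b ≤ d a b :=
  csInf_le (bddBelow_walkSums hd a b) (edge_mem_walkSums d h)

theorem hatd_triangle_s13 {E : X → X → Prop} {d : X → X → ℝ}
    (hd : ∀ ⦃a b⦄, E a b → 0 ≤ d a b) {x y z : X} (hxy : Joined E x y) (hyz : Joined E y z) :
    hatd E d x z ≤ hatd E d x y + hatd E d y z := by
  have key : ∀ s ∈ walkSums E d x y, hatd E d x z - s ≤ hatd E d y z := fun s hs =>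
    le_csInf (hyz.walkSums_nonempty d) fun t ht =>
      sub_le_iff_le_add'.2 (csInf_le (bddBelow_walkSums hd x z) (add_mem_walkSums hs ht))
  have : hatd E d x z - hatd E d y z ≤ hatd E d x y :=
    le_csInf (hxy.walkSums_nonempty d) fun s hs => by linarith [key s hs]
  linarith

namespace IsGraphPseudometric

variable {E : X → X → Prop} {d : X → X → ℝ}

theorem mem_Vtx_right (h : IsGraphPseudometric E d) {a b : X} (hab : E a b) : b ∈ Vtx E :=
  ⟨a, h.symm hab⟩

theorem hatd_triangle_s13 (h : IsGraphPseudometric E d) {x y z : X}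
    (hx : x ∈ Vtx E) (hy : y ∈ Vtx E) (hz : z ∈ Vtx E) :
    hatd E d x z ≤ hatd E d x y + hatd E d y z :=
  GraphMetricPaper.hatd_triangle_s13 h.nonneg (h.connected x hx y hy) (h.connected y hy z hz)

theorem hatd_le_add_edge (h : IsGraphPseudometric E d) {x a b : X}
    (hx : x ∈ Vtx E) (hab : E a b) : hatd E d x b ≤ hatd E d x a + d a b :=
  (h.hatd_triangle_s13 hx ⟨b, hab⟩ (h.mem_Vtx_right hab)).trans
    (by gcongr; exact hatd_le_of_edge h.nonneg hab)

end IsGraphPseudometric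

namespace GluingSetup

variable {Ep : X → X → Prop} {wp : X → X → ℝ} {F : Set ((X → X → Prop) × (X → X → ℝ))}
  {wd : X → X → ℝ}

theorem wd_nonneg (hs : GluingSetup Ep wp F wd) ⦃a b : X⦄ (h : gluedEdge Ep F a b) :
    0 ≤ wd a b := by
  rcases h with h | ⟨f, hf, h⟩
  · exact hs.wd_p h ▸ hs.hp.nonneg h
  · exact hs.wd_F f hf h ▸ (hs.hF f hf).nonneg h

/-- `v` is reachable from `x` at cost `s`: either inside `p`, or through `p` followed by a
member of the family. -/
def CostBound (Ep : X → X → Prop) (wp : X → X → ℝ) (F : Set ((X → X → Prop) × (X → X → ℝ)))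
    (x v : X) (s : ℝ) : Prop :=
  (v ∈ Vtx Ep → hatd Ep wp x v ≤ s) ∧
    ∀ f ∈ F, v ∈ Vtx f.1 →
      ∃ z ∈ Vtx f.1 ∩ Vtx Ep, hatd Ep wp x z + hatd f.1 f.2 z v ≤ s

theorem costBound_of_mem (hs : GluingSetup Ep wp F wd) {x v : X} {s : ℝ}
    (hv : v ∈ Vtx Ep) (h : hatd Ep wp x v ≤ s) : CostBound Ep wp F x v s :=
  ⟨fun _ => h, fun f hf hvf =>
    ⟨v, ⟨hvf, hv⟩, by rwa [hatd_self_s13 (hs.hF f hf).nonneg, add_zero]⟩⟩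

theorem hatd_p_le (hs : GluingSetup Ep wp F wd) {f : (X → X → Prop) × (X → X → ℝ)}
    (hf : f ∈ F) {z w : X} (hz : z ∈ Vtx f.1 ∩ Vtx Ep) (hw : w ∈ Vtx f.1 ∩ Vtx Ep) :
    hatd Ep wp z w ≤ hatd f.1 f.2 z w := by
  rcases eq_or_ne z w with rfl | hne
  · rw [hatd_self_s13 hs.hp.nonneg, hatd_self_s13 (hs.hF f hf).nonneg]
  · exact (hs.agree f hf z hz w hw hne).ge

theorem costBound_step (hs : GluingSetup Ep wp F wd) {x v w : X} {s : ℝ} (hx : x ∈ Vtx Ep)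
    (h : CostBound Ep wp F x v s) (hvw : gluedEdge Ep F v w) :
    CostBound Ep wp F x w (s + wd v w) := by
  rcases hvw with hvw | ⟨f, hf, hvw⟩
  · refine hs.costBound_of_mem (hs.hp.mem_Vtx_right hvw) ?_
    rw [hs.wd_p hvw]
    linarith [hs.hp.hatd_le_add_edge hx hvw, h.1 ⟨w, hvw⟩]
  · obtain ⟨z, hz, hzs⟩ := h.2 f hf ⟨w, hvw⟩
    have hwf : w ∈ Vtx f.1 := (hs.hF f hf).mem_Vtx_right hvw
    have hzw : hatd Ep wp x z + hatd f.1 f.2 z w ≤ s + wd v w := by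
      rw [hs.wd_F f hf hvw]
      linarith [(hs.hF f hf).hatd_le_add_edge hz.1 hvw]
    by_cases hw : w ∈ Vtx Ep
    · refine hs.costBound_of_mem hw ?_
      linarith [hs.hp.hatd_triangle_s13 hx hz.2 hw, hs.hatd_p_le hf hz ⟨hwf, hw⟩]
    · refine ⟨fun h => absurd h hw, fun g hg hwg => ?_⟩
      obtain rfl : f = g := by
        by_contra hne
        exact hw (hs.inter_sub f hf g hg hne ⟨hwf, hwg⟩)
      exact ⟨z, hz, hzw⟩

theorem costBound_walk (hs : GluingSetup Ep wp F wd) {n : ℕ} {c : ℕ → X}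
    (hx : c 0 ∈ Vtx Ep) (hc : ∀ i, i < n → gluedEdge Ep F (c i) (c (i + 1))) :
    CostBound Ep wp F (c 0) (c n) (∑ i ∈ Finset.range n, wd (c i) (c (i + 1))) := by
  induction n with
  | zero => exact hs.costBound_of_mem hx (by simp [hatd_self_s13 hs.hp.nonneg])
  | succ n ih =>
    rw [Finset.sum_range_succ]
    exact hs.costBound_step hx (ih fun i hi => hc i (hi.trans n.lt_succ_self))
      (hc n n.lt_succ_self)

theorem walkSums_subset (hs : GluingSetup Ep wp F wd) (x y : X) :
    walkSums Ep wp x y ⊆ walkSums (gluedEdge Ep F) wd x y := by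
  rintro _ ⟨n, c, hc0, hcn, hc, rfl⟩
  exact ⟨n, c, hc0, hcn, fun i hi => Or.inl (hc i hi),
    Finset.sum_congr rfl fun i hi => (hs.wd_p (hc i (Finset.mem_range.1 hi))).symm⟩

end GluingSetup

/-- In the gluing setup, `d̂(x,y) = p̂(x,y)` for all `x, y ∈ V_p`. -/
theorem gluing_hatd_on_p (Ep : X → X → Prop) (wp : X → X → ℝ)
    (F : Set ((X → X → Prop) × (X → X → ℝ))) (wd : X → X → ℝ)
    (hs : GluingSetup Ep wp F wd) :
    ∀ x ∈ Vtx Ep, ∀ y ∈ Vtx Ep,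
      hatd (gluedEdge Ep F) wd x y = hatd Ep wp x y := by
  intro x hx y hy
  have hne : (walkSums Ep wp x y).Nonempty := (hs.hp.connected x hx y hy).walkSums_nonempty wp
  refine le_antisymm
    (csInf_le_csInf (bddBelow_walkSums hs.wd_nonneg x y) hne (hs.walkSums_subset x y))
    (le_csInf (hne.mono (hs.walkSums_subset x y)) ?_)
  rintro _ ⟨n, c, rfl, rfl, hc, rfl⟩
  exact (hs.costBound_walk hx hc).1 hy

end GraphMetricPaper
end
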